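/- For all nonnegative integers a and b, one has S⊖(a, b | a, b) = a·b·C(2a+2b+2, 2a+1)/(4a+4b+2); equivalently, (4a+4b+2)·S⊖(a, b | a, b) = a·b·C(2a+2b+2, 2a+1). (The Wiener index of the minuscule lattice Par(a×b), equation (4.2).) -/

import Mathlib

open Finset

open scoped Classical in
/-- `Par a b` is the set of Young diagrams (lower sets of boxes) fitting inside an
`a × b` rectangle, encoded as finsets of cells `(i, j)` with `i < a` and `j < b`. -/
noncomputable def Par (a b : ℕ) : Finset (Finset (ℕ × ℕ)) :=
  ((Finset.range a ×ˢ Finset.range b).powerset).filter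
    (fun S => IsLowerSet (S : Set (ℕ × ℕ)))

/-- `Sdiff a b c d` is the sum of `|λ ⊖ μ|` over all `λ ∈ Par(a×b)` and `μ ∈ Par(c×d)`. -/
noncomputable def Sdiff (a b c d : ℕ) : ℕ :=
  ∑ l ∈ Par a b, ∑ m ∈ Par c d, (symmDiff l m).card

/-!
A diagram in `Par a b` is a lattice path of `a + b` steps, `a` of them upwards, and `|λ ⊖ μ|` is the
sum over `k` of the absolute difference between the numbers of up-steps of the two paths among their
first `k` steps: this difference counts the cells of `λ ⊖ μ` on one diagonal. For two independent
uniform paths, a discrete Tanaka formula expresses the growth of the expected difference through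
the event that the paths meet after `k` steps. Summing over all meeting points and symmetrising
reduces the theorem to the convolution

  `2 ∑ C(k, u) ^ 2 C(l, v) ^ 2 = C(2 n + 2, 2 c + 1)`, over `k + l = n` and `u + v = c`,

which holds because the square of
`∑ C(k, u) ^ 2 s ^ (2 u) x ^ k = 1 / √((1 - (1 + s) ^ 2 x) (1 - (1 - s) ^ 2 x))`
is a product of two geometric series in `x`.
-/

section YoungDiagrams

variable {a b k i j : ℕ} {l m : Finset (ℕ × ℕ)}

theorem mem_Par : l ∈ Par a b ↔ l ⊆ range a ×ˢ range b ∧ IsLowerSet (l : Set (ℕ × ℕ)) := by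
  simp only [Par, mem_filter, mem_powerset]

theorem lt_and_lt_of_mem_Par (hl : l ∈ Par a b) (h : (i, j) ∈ l) : i < a ∧ j < b := by
  simpa only [mem_product, mem_range] using (mem_Par.1 hl).1 h

theorem mem_of_le_of_mem_Par (hl : l ∈ Par a b) {i' j' : ℕ} (hi : i' ≤ i) (hj : j' ≤ j)
    (h : (i, j) ∈ l) : (i', j') ∈ l :=
  (mem_Par.1 hl).2 (Prod.mk_le_mk.2 ⟨hi, hj⟩) h

theorem Par_zero_left (b : ℕ) : Par 0 b = {∅} := by
  ext l
  simp +contextual [mem_Par, iff_def, isLowerSet_empty]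

theorem Par_zero_right (a : ℕ) : Par a 0 = {∅} := by
  ext l
  simp +contextual [mem_Par, iff_def, isLowerSet_empty]

/-- The diagram `l` shifted one column to the right, preceded by a full column of height `a`. -/
def consColumn (a : ℕ) (l : Finset (ℕ × ℕ)) : Finset (ℕ × ℕ) :=
  range a ×ˢ {0} ∪ l.image (Prod.map id Nat.succ)

@[simp]
theorem mk_zero_mem_consColumn : (i, 0) ∈ consColumn a l ↔ i < a := by
  simp [consColumn]

@[simp]
theorem mk_succ_mem_consColumn : (i, j + 1) ∈ consColumn a l ↔ (i, j) ∈ l := by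
  simp [consColumn]

theorem consColumn_injective (a : ℕ) : Function.Injective (consColumn a) := by
  intro l m h
  ext ⟨i, j⟩
  rw [← mk_succ_mem_consColumn (a := a), h, mk_succ_mem_consColumn]

theorem consColumn_mem_Par (hl : l ∈ Par a b) : consColumn a l ∈ Par a (b + 1) := by
  rw [mem_Par]
  refine ⟨?_, ?_⟩
  · rintro ⟨i, _ | j⟩ h
    · simpa using h
    · simpa using lt_and_lt_of_mem_Par hl (mk_succ_mem_consColumn.1 h)
  · rintro ⟨i, _ | j⟩ ⟨i', _ | j'⟩ ⟨hi, hj⟩ h <;>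
      simp only [mem_coe, mk_zero_mem_consColumn, mk_succ_mem_consColumn] at hi hj h ⊢
    · exact hi.trans_lt h
    · omega
    · exact hi.trans_lt (lt_and_lt_of_mem_Par hl h).1
    · exact mem_of_le_of_mem_Par hl hi (Nat.succ_le_succ_iff.1 hj) h

theorem exists_consColumn_eq (hl : l ∈ Par (a + 1) (b + 1)) (h : (a, 0) ∈ l) :
    ∃ m ∈ Par (a + 1) b, consColumn (a + 1) m = l := by
  have shift_injOn := (Function.injective_id.prodMap Nat.succ_injective).injOn
    (s := Prod.map id Nat.succ ⁻¹' (l : Set (ℕ × ℕ)))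
  refine ⟨l.preimage (Prod.map id Nat.succ) shift_injOn, mem_Par.2 ⟨?_, ?_⟩, ?_⟩
  · rintro ⟨i, j⟩ hij
    rw [mem_preimage, Prod.map_apply, id] at hij
    simpa using lt_and_lt_of_mem_Par hl hij
  · rw [coe_preimage]
    exact (mem_Par.1 hl).2.preimage (monotone_id.prodMap fun _ _ ↦ Nat.succ_le_succ)
  · ext ⟨i, _ | j⟩
    · rw [mk_zero_mem_consColumn]
      exact ⟨fun hi ↦ mem_of_le_of_mem_Par hl (Nat.lt_succ_iff.1 hi) le_rfl h,
        fun hi ↦ (lt_and_lt_of_mem_Par hl hi).1⟩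
    · rw [mk_succ_mem_consColumn, mem_preimage, Prod.map_apply, id]

theorem filter_mem_Par_succ_succ (a b : ℕ) :
    {l ∈ Par (a + 1) (b + 1) | (a, 0) ∈ l} = (Par (a + 1) b).image (consColumn (a + 1)) := by
  ext l
  rw [mem_filter, mem_image]
  constructor
  · rintro ⟨hl, h⟩
    exact exists_consColumn_eq hl h
  · rintro ⟨m, hm, rfl⟩
    exact ⟨consColumn_mem_Par hm, mk_zero_mem_consColumn.2 a.lt_succ_self⟩

theorem filter_notMem_Par_succ (a b : ℕ) : {l ∈ Par (a + 1) b | (a, 0) ∉ l} = Par a b := by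
  ext l
  rw [mem_filter]
  constructor
  · rintro ⟨hl, h⟩
    refine mem_Par.2 ⟨?_, (mem_Par.1 hl).2⟩
    rintro ⟨i, j⟩ hij
    have hi : i < a := by
      by_contra! hai
      exact h (mem_of_le_of_mem_Par hl hai j.zero_le hij)
    simpa [hi] using (lt_and_lt_of_mem_Par hl hij).2
  · intro hl
    refine ⟨mem_Par.2 ⟨(mem_Par.1 hl).1.trans ?_, (mem_Par.1 hl).2⟩, fun h ↦ ?_⟩
    · exact product_subset_product_left (range_mono a.le_succ)
    · exact (lt_and_lt_of_mem_Par hl h).1.false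

theorem sum_Par_succ_succ {M : Type*} [AddCommMonoid M] (a b : ℕ) (g : Finset (ℕ × ℕ) → M) :
    ∑ l ∈ Par (a + 1) (b + 1), g l =
      ∑ l ∈ Par (a + 1) b, g (consColumn (a + 1) l) + ∑ l ∈ Par a (b + 1), g l := by
  rw [← sum_filter_add_sum_filter_not _ ((a, 0) ∈ ·), filter_mem_Par_succ_succ,
    filter_notMem_Par_succ, sum_image (consColumn_injective _).injOn]

theorem card_Par : ∀ a b : ℕ, #(Par a b) = (a + b).choose a
  | 0, b => by simp [Par_zero_left]
  | a + 1, 0 => by simp [Par_zero_right]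
  | a + 1, b + 1 => by
    rw [card_eq_sum_ones, sum_Par_succ_succ, ← card_eq_sum_ones, ← card_eq_sum_ones, card_Par,
      card_Par, ← add_assoc (a + 1), Nat.choose_succ_succ', add_comm, Nat.succ_add_eq_add_succ a b]

end YoungDiagrams

section Ascents

variable {a b k : ℕ} {l m : Finset (ℕ × ℕ)}

/-- The boundary of `l`, read from the corner `(a, 0)`, is a path of up-steps and right-steps, and
this is the set of rows in `range a` whose up-step is among its first `k` steps. The up-step of
row `i` is step number `a - i + λᵢ`, where `λᵢ` is the length of the row, so the condition is
`λᵢ ≤ i + k - a`, which is tested on a single cell. -/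
def ascents (a k : ℕ) (l : Finset (ℕ × ℕ)) : Finset ℕ :=
  {i ∈ range a | a ≤ i + k ∧ (i, i + k - a) ∉ l}

theorem ascents_zero_right (a : ℕ) (l : Finset (ℕ × ℕ)) : ascents a 0 l = ∅ := by
  refine filter_eq_empty_iff.2 fun i hi h ↦ ?_
  exact (mem_range.1 hi).not_ge h.1

theorem card_ascents_empty (h : k ≤ a) : #(ascents a k ∅) = k := by
  have : ascents a k ∅ = Ico (a - k) a := by
    ext i
    simp only [ascents, mem_filter, mem_range, notMem_empty, not_false_eq_true, and_true, mem_Ico]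
    omega
  rw [this, Nat.card_Ico, Nat.sub_sub_self h]

theorem ascents_consColumn (a k : ℕ) (l : Finset (ℕ × ℕ)) :
    ascents a (k + 1) (consColumn a l) = ascents a k l := by
  refine filter_congr fun i hi ↦ ?_
  rw [mem_range] at hi
  rcases lt_or_ge (i + k) a with hik | hik
  · have corner : i + (k + 1) - a = 0 := by omega
    simp [corner, hi, hik.not_ge]
  · have shifted : i + (k + 1) - a = i + k - a + 1 := by omega
    simp only [shifted, mk_succ_mem_consColumn, hik, true_and, and_iff_right_iff_imp]
    omega

theorem card_ascents_succ_succ (hl : l ∈ Par a b) (k : ℕ) :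
    #(ascents (a + 1) (k + 1) l) = #(ascents a k l) + 1 := by
  have last_notMem : (a, k) ∉ l := fun h ↦ (lt_and_lt_of_mem_Par hl h).1.false
  have insert_last : ascents (a + 1) (k + 1) l = insert a (ascents a k l) := by
    simp [ascents, range_add_one, filter_insert, ← add_assoc, last_notMem]
  rw [insert_last, card_insert_of_notMem (by simp [ascents])]

theorem sum_antidiagonal_succ_choose_succ_nsmul {M : Type*} [AddCommMonoid M] (a k : ℕ)
    (g : ℕ × ℕ → M) :
    ∑ p ∈ antidiagonal (a + 1), (k + 1).choose p.1 • g p =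
      ∑ p ∈ antidiagonal (a + 1), k.choose p.1 • g p
        + ∑ p ∈ antidiagonal a, k.choose p.1 • g (p.1 + 1, p.2) := by
  simp only [Nat.sum_antidiagonal_succ, Nat.choose_zero_right, Nat.choose_succ_succ', add_smul,
    sum_add_distrib]
  rw [add_assoc, add_comm (∑ p ∈ antidiagonal a, k.choose p.1 • g (p.1 + 1, p.2))]

theorem sum_Par_card_ascents {M : Type*} [AddCommMonoid M] {a b k r : ℕ} (h : k + r = a + b)
    (f : ℕ → M) :
    ∑ l ∈ Par a b, f #(ascents a k l) =
      ∑ p ∈ antidiagonal a, k.choose p.1 • r.choose p.2 • f p.1 := by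
  induction k generalizing a b f with
  | zero =>
    obtain rfl : r = a + b := by omega
    cases a with
    | zero => simp [Par_zero_left, ascents]
    | succ a => simp [ascents_zero_right, card_Par, Nat.sum_antidiagonal_succ]
  | succ k ih =>
    rcases a with _ | a
    · simp [Par_zero_left, ascents]
    rcases b with _ | b
    · rw [Par_zero_right, sum_singleton, card_ascents_empty (by omega), ← add_zero (a + 1), ← h,
        sum_eq_single_of_mem (k + 1, r) (HasAntidiagonal.mem_antidiagonal.2 rfl)]
      · simp
      · rintro ⟨u, v⟩ huv hne
        rw [HasAntidiagonal.mem_antidiagonal] at huv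
        rw [Ne, Prod.mk.injEq] at hne
        rcases lt_or_ge (k + 1) u with hu | hu
        · rw [Nat.choose_eq_zero_of_lt hu, zero_smul]
        · rw [Nat.choose_eq_zero_of_lt (show r < v by omega), zero_smul, smul_zero]
    have right_step : ∑ l ∈ Par (a + 1) b, f #(ascents (a + 1) (k + 1) (consColumn (a + 1) l)) =
        ∑ p ∈ antidiagonal (a + 1), k.choose p.1 • r.choose p.2 • f p.1 := by
      simp only [ascents_consColumn]
      exact ih (by omega) f
    have up_step : ∑ l ∈ Par a (b + 1), f #(ascents (a + 1) (k + 1) l) =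
        ∑ p ∈ antidiagonal a, k.choose p.1 • r.choose p.2 • f (p.1 + 1) := by
      rw [← ih (b := b + 1) (by omega) fun u ↦ f (u + 1)]
      exact sum_congr rfl fun l hl ↦ by rw [card_ascents_succ_succ hl]
    rw [sum_Par_succ_succ, right_step, up_step, sum_antidiagonal_succ_choose_succ_nsmul]

theorem ascents_subset_or_subset {b' : ℕ} (hl : l ∈ Par a b) (hm : m ∈ Par a b') (k : ℕ) :
    ascents a k l ⊆ ascents a k m ∨ ascents a k m ⊆ ascents a k l := by
  by_contra! h
  simp only [not_subset, ascents, mem_filter, not_and, not_not] at h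
  obtain ⟨⟨i, ⟨hi, hik, hil⟩, him⟩, ⟨i', ⟨hi', hik', him'⟩, hil'⟩⟩ := h
  rcases le_total i i' with hii | hii
  · exact hil (mem_of_le_of_mem_Par hl hii (by omega) (hil' hi' hik'))
  · exact him' (mem_of_le_of_mem_Par hm hii (by omega) (him hi hik))

theorem card_symmDiff_of_subset_or_subset {α : Type*} [DecidableEq α] {s t : Finset α}
    (h : s ⊆ t ∨ t ⊆ s) : (#(symmDiff s t) : ℤ) = |(#s : ℤ) - #t| := by
  wlog hst : s ⊆ t generalizing s t
  · rw [symmDiff_comm, abs_sub_comm]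
    exact this h.symm (h.resolve_left hst)
  rw [symmDiff_of_le hst, card_sdiff_of_subset hst, abs_of_nonpos (by simpa using card_le_card hst),
    Nat.cast_sub (card_le_card hst), neg_sub]

theorem image_fst_filter_diagonal_symmDiff (hl : l ∈ Par a b) (hm : m ∈ Par a b) (k : ℕ) :
    {c ∈ symmDiff l m | c.2 + a = c.1 + k}.image Prod.fst =
      symmDiff (ascents a k l) (ascents a k m) := by
  ext i
  have := fun j ↦ lt_and_lt_of_mem_Par (i := i) (j := j) hl
  have := fun j ↦ lt_and_lt_of_mem_Par (i := i) (j := j) hm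
  simp only [mem_image, mem_filter, mem_symmDiff, ascents, Prod.exists, mem_range]
  constructor
  · rintro ⟨_, j, ⟨h, hj⟩, rfl⟩
    obtain rfl : j = _ + k - a := Nat.eq_sub_of_add_eq hj
    grind
  · intro h
    refine ⟨i, i + k - a, ?_, rfl⟩
    grind

theorem card_filter_diagonal_symmDiff (hl : l ∈ Par a b) (hm : m ∈ Par a b) (k : ℕ) :
    (#{c ∈ symmDiff l m | c.2 + a = c.1 + k} : ℤ) =
      |(#(ascents a k l) : ℤ) - #(ascents a k m)| := by
  rw [← card_symmDiff_of_subset_or_subset (ascents_subset_or_subset hl hm k),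
    ← image_fst_filter_diagonal_symmDiff hl hm, card_image_of_injOn]
  rintro ⟨i, j⟩ hc ⟨i', j'⟩ hc' (rfl : i = i')
  rw [mem_coe, mem_filter] at hc hc'
  rw [Prod.mk.injEq]
  omega

theorem card_symmDiff_eq_sum_antidiagonal (hl : l ∈ Par a b) (hm : m ∈ Par a b) :
    (#(symmDiff l m) : ℤ) = ∑ i ∈ antidiagonal (a + b),
      |(#(ascents a i.1 l) : ℤ) - #(ascents a i.1 m)| := by
  have bounds : ∀ c ∈ symmDiff l m, c.1 < a ∧ c.2 < b := by
    rintro ⟨i, j⟩ h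
    rcases mem_symmDiff.1 h with h | h
    · exact lt_and_lt_of_mem_Par hl h.1
    · exact lt_and_lt_of_mem_Par hm h.1
  rw [Nat.sum_antidiagonal_eq_sum_range_succ_mk,
    card_eq_sum_card_fiberwise (f := fun c ↦ c.2 + a - c.1) (t := range (a + b + 1))]
  · rw [Nat.cast_sum]
    refine sum_congr rfl fun k _ ↦ ?_
    rw [← card_filter_diagonal_symmDiff hl hm]
    congr 2
    refine filter_congr fun c hc ↦ ?_
    have := bounds c hc
    omega
  · intro c hc
    have := bounds c hc
    simp only [coe_range, Set.mem_Iio]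
    omega

end Ascents

theorem cast_add_one_mul_choose_eq {R : Type*} [Semiring R] (k u : ℕ) :
    ((k : R) + 1) * k.choose u = (k + 1).choose (u + 1) * (u + 1) :=
  mod_cast congrArg (Nat.cast (R := R)) (Nat.add_one_mul_choose_eq k u)

theorem cast_add_one_mul_choose_add_one {R : Type*} [CommRing R] (k u : ℕ) :
    ((u : R) + 1) * k.choose (u + 1) = (k - u) * k.choose u := by
  have pascal : ((k + 1).choose (u + 1) : R) = k.choose u + k.choose (u + 1) := by
    rw [Nat.choose_succ_succ' k u, Nat.cast_add]
  linear_combination -cast_add_one_mul_choose_eq (R := R) k u - (u + 1) * pascal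

theorem cast_add_one_mul_choose_eq_sub_mul {R : Type*} [CommRing R] (k u : ℕ) :
    ((k : R) + 1) * k.choose u = (k + 1 - u) * (k + 1).choose u := by
  have ratio := cast_add_one_mul_choose_add_one (R := R) (k + 1) u
  push_cast at ratio
  linear_combination cast_add_one_mul_choose_eq (R := R) k u + ratio

theorem choose_add_two_add_two (k u : ℕ) :
    (k + 2).choose (u + 2) = k.choose u + 2 * k.choose (u + 1) + k.choose (u + 2) := by
  simp only [Nat.choose_succ_succ']
  ring

theorem choose_sq_recurrence {R : Type*} [CommRing R] (k u : ℕ) :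
    ((k : R) + 2) * (k + 2).choose (u + 2) ^ 2 =
      (2 * k + 3) * ((k + 1).choose (u + 2) ^ 2 + (k + 1).choose (u + 1) ^ 2)
        - (k + 1) * (k.choose (u + 2) ^ 2 - 2 * k.choose (u + 1) ^ 2 + k.choose u ^ 2) := by
  have ratio₁ := cast_add_one_mul_choose_add_one (R := R) k u
  have ratio₂ := cast_add_one_mul_choose_add_one (R := R) k (u + 1)
  simp only [Nat.choose_succ_succ', Nat.cast_add, Nat.cast_one] at ratio₂ ⊢
  linear_combination 2 * (k.choose u + k.choose (u + 1) : R) * ratio₂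
    - 2 * (k.choose (u + 1) + k.choose (u + 2) : R) * ratio₁

section GeneratingFunction

open PowerSeries

variable {A : Type*} [CommRing A]

theorem coeff_X_mul_derivative (F : A⟦X⟧) (n : ℕ) :
    coeff n (X * derivative A F) = n * coeff n F := by
  cases n with
  | zero => simp
  | succ n => rw [coeff_succ_X_mul, coeff_derivative, mul_comm, Nat.cast_succ]

theorem one_sub_mul_derivative_eq_of_recurrence {c e : A} {P : ℕ → A}
    (h₀ : P 0 = 1) (h₁ : P 1 = c)
    (hP : ∀ k : ℕ, (k + 2) * P (k + 2) = (2 * k + 3) * (c * P (k + 1)) - (k + 1) * (e * P k)) :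
    (1 - C (2 * c) * X + C e * X ^ 2) * derivative A (PowerSeries.mk P) =
      (C c - C e * X) * PowerSeries.mk P := by
  have distribute (F : A⟦X⟧) : (1 - C (2 * c) * X + C e * X ^ 2) * F =
      F - C (2 * c) * (X * F) + C e * (X * (X * F)) := by ring
  rw [distribute, sub_mul, mul_assoc]
  ext n
  cases n with
  | zero =>
    simp only [map_add, map_sub, coeff_C_mul, coeff_zero_X_mul, coeff_derivative, coeff_mk,
      h₀, h₁]
    simp
  | succ n =>
    simp only [map_add, map_sub, coeff_C_mul, coeff_X_mul_derivative, coeff_succ_X_mul,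
      coeff_derivative, coeff_mk, Nat.cast_add, Nat.cast_one]
    linear_combination hP n

theorem mk_sq_mul_eq_one_of_recurrence [IsAddTorsionFree A] {c e : A} {P : ℕ → A}
    (h₀ : P 0 = 1) (h₁ : P 1 = c)
    (hP : ∀ k : ℕ, (k + 2) * P (k + 2) = (2 * k + 3) * (c * P (k + 1)) - (k + 1) * (e * P k)) :
    PowerSeries.mk P ^ 2 * (1 - C (2 * c) * X + C e * X ^ 2) = 1 := by
  have ode := one_sub_mul_derivative_eq_of_recurrence h₀ h₁ hP
  apply derivative.ext
  · simp only [Derivation.leibniz, Derivation.leibniz_pow, map_add, map_sub, smul_eq_mul,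
      nsmul_eq_mul, derivative_C, derivative_X, derivative_one]
    rw [map_mul, map_ofNat] at ode ⊢
    linear_combination (2 * PowerSeries.mk P) * ode
  · simp [h₀]

theorem mk_pow_mul_one_sub (r : A) : PowerSeries.mk (r ^ ·) * (1 - C r * X) = 1 := by
  rw [mul_sub, mul_one, ← mul_assoc]
  ext (_ | k) <;> simp [coeff_succ_mul_X, coeff_one, pow_succ]

theorem sub_mul_sum_antidiagonal_of_recurrence [IsAddTorsionFree A] {c p q : A} {P : ℕ → A}
    (hpq : p + q = 2 * c) (h₀ : P 0 = 1) (h₁ : P 1 = c)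
    (hP : ∀ k : ℕ,
      (k + 2) * P (k + 2) = (2 * k + 3) * (c * P (k + 1)) - (k + 1) * (p * q * P k)) (n : ℕ) :
    (p - q) * ∑ i ∈ antidiagonal n, P i.1 * P i.2 = p ^ (n + 1) - q ^ (n + 1) := by
  have factor : 1 - C (2 * c) * X + C (p * q) * X ^ 2 = (1 - C p * X) * (1 - C q * X) := by
    rw [← hpq, map_add, map_mul]
    ring
  have square : PowerSeries.mk P ^ 2 = PowerSeries.mk (p ^ ·) * PowerSeries.mk (q ^ ·) := by
    refine left_inv_eq_right_inv (factor ▸ mk_sq_mul_eq_one_of_recurrence h₀ h₁ hP) ?_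
    linear_combination
      PowerSeries.mk (q ^ ·) * (1 - C q * X) * mk_pow_mul_one_sub p + mk_pow_mul_one_sub q
  have coeff_square := congrArg (coeff n) square
  simp only [sq, coeff_mul, coeff_mk] at coeff_square
  rw [coeff_square, Nat.sum_antidiagonal_eq_sum_range_succ (fun i j ↦ p ^ i * q ^ j)]
  exact (Commute.all p q).mul_geom_sum₂ (n + 1)

end GeneratingFunction

section Convolution

open Polynomial

/-- The polynomial `P_k = ∑ u, C(k, u) ^ 2 t ^ u`, the coefficient of `x ^ k` in
`1 / √((1 - (1 + √t) ^ 2 x) (1 - (1 - √t) ^ 2 x))`. -/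
noncomputable def chooseSqPoly (k : ℕ) : ℤ[X] :=
  ∑ u ∈ range (k + 1), monomial u ((k.choose u : ℤ) ^ 2)

theorem coeff_chooseSqPoly (k u : ℕ) : (chooseSqPoly k).coeff u = (k.choose u : ℤ) ^ 2 := by
  simp only [chooseSqPoly, finsetSum_coeff, coeff_monomial, sum_ite_eq',
    mem_range, Order.lt_add_one_iff, ite_eq_left_iff, not_le]
  intro h
  simp [Nat.choose_eq_zero_of_lt h]

theorem chooseSqPoly_zero : chooseSqPoly 0 = 1 := by
  simp [chooseSqPoly]

theorem chooseSqPoly_one : chooseSqPoly 1 = 1 + X := by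
  simp [chooseSqPoly, sum_range_succ, monomial_one_one_eq_X]

theorem chooseSqPoly_recurrence (k : ℕ) :
    (k + 2 : ℤ[X]) * chooseSqPoly (k + 2) =
      (2 * k + 3 : ℤ[X]) * ((1 + X) * chooseSqPoly (k + 1))
        - (k + 1 : ℤ[X]) * ((1 - X) ^ 2 * chooseSqPoly k) := by
  have expand₁ : (1 + X) * chooseSqPoly (k + 1) =
      chooseSqPoly (k + 1) + X * chooseSqPoly (k + 1) := by ring
  have expand₂ : (1 - X) ^ 2 * chooseSqPoly k =
      chooseSqPoly k - C 2 * (X * chooseSqPoly k) + X * (X * chooseSqPoly k) := by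
    rw [map_ofNat]
    ring
  have scalars : (k + 2 : ℤ[X]) = C (k + 2 : ℤ) ∧ (2 * k + 3 : ℤ[X]) = C (2 * k + 3 : ℤ) ∧
      (k + 1 : ℤ[X]) = C (k + 1 : ℤ) := by simp
  rw [expand₁, expand₂, scalars.1, scalars.2.1, scalars.2.2]
  ext (_ | _ | u) <;>
    simp only [coeff_add, coeff_sub, coeff_C_mul, coeff_X_mul, coeff_X_mul_zero,
      coeff_chooseSqPoly]
  · simp only [Nat.choose_zero_right, Nat.cast_one, one_pow, mul_one, add_zero, mul_zero, sub_zero]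
    ring
  · simp only [zero_add, Nat.choose_one_right, Nat.cast_add, Nat.cast_ofNat, Nat.cast_one,
      Nat.choose_zero_right, one_pow, mul_one, add_zero]
    ring
  · linear_combination choose_sq_recurrence (R := ℤ) k u

theorem coeff_one_sub_X_pow {R : Type*} [CommRing R] (n k : ℕ) :
    ((1 - X : R[X]) ^ n).coeff k = n.choose k * (-1) ^ k := by
  have substitution : (1 - X : R[X]) ^ n = ((1 + X) ^ n).comp (C (-1) * X) := by
    simp [sub_eq_add_neg]
  rw [substitution, comp_C_mul_X_coeff, coeff_one_add_X_pow]

theorem four_mul_X_mul_sum_chooseSqPoly (n : ℕ) :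
    4 * X * expand ℤ 2 (∑ i ∈ antidiagonal n, chooseSqPoly i.1 * chooseSqPoly i.2) =
      (1 + X) ^ (2 * n + 2) - (1 - X) ^ (2 * n + 2) := by
  have recurrence (k : ℕ) := congrArg (expand ℤ 2) (chooseSqPoly_recurrence k)
  have convolution := sub_mul_sum_antidiagonal_of_recurrence
    (p := (1 + X : ℤ[X]) ^ 2) (q := (1 - X) ^ 2) (c := expand ℤ 2 (1 + X))
    (P := fun k ↦ expand ℤ 2 (chooseSqPoly k)) (by simp only [map_add, map_one, expand_X]; ring)
    (by simp [chooseSqPoly_zero]) (by simp [chooseSqPoly_one])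
    (fun k ↦ by
      have := recurrence k
      simp only [map_add, map_sub, map_mul, map_pow, map_natCast, map_ofNat, map_one, expand_X]
        at this ⊢
      linear_combination this) n
  simp only [map_sum, map_mul]
  simp only [← pow_mul] at convolution
  linear_combination convolution

theorem two_mul_sum_choose_sq_mul_choose_sq (n a : ℕ) :
    2 * ∑ i ∈ antidiagonal n, ∑ j ∈ antidiagonal a, i.1.choose j.1 ^ 2 * i.2.choose j.2 ^ 2 =
      (2 * n + 2).choose (2 * a + 1) := by
  have h := congrArg (coeff · (2 * a + 1)) (four_mul_X_mul_sum_chooseSqPoly n)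
  simp only [mul_assoc] at h
  rw [← C_ofNat, coeff_C_mul, coeff_X_mul, mul_comm 2 a, coeff_expand_mul two_pos, coeff_sub,
    coeff_one_add_X_pow, coeff_one_sub_X_pow, finsetSum_coeff] at h
  simp only [coeff_mul, coeff_chooseSqPoly] at h
  rw [Odd.neg_one_pow ⟨a, by ring⟩] at h
  zify
  rw [mul_comm 2 a]
  linarith

end Convolution

section CoupledPaths

/-- A path with `a` up-steps, conditioned on its first `k` and last `r` steps being separated by
one more step, takes that step to the right or upwards with weights `r + 1 - v` and `v`, where `v`
is the number of remaining up-steps. -/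
theorem add_one_mul_sum_choose_succ {R : Type*} [CommRing R] (a k r : ℕ) (f : ℕ → R) :
    (r + 1) * ∑ p ∈ antidiagonal a, (k + 1).choose p.1 * r.choose p.2 * f p.1 =
      ∑ p ∈ antidiagonal a, k.choose p.1 * (r + 1).choose p.2 *
        ((r + 1 - p.2) * f p.1 + p.2 * f (p.1 + 1)) := by
  have right_step (p : ℕ × ℕ) : (r + 1) * (k.choose p.1 * (r.choose p.2 * f p.1)) =
      k.choose p.1 * (r + 1).choose p.2 * ((r + 1 - p.2) * f p.1) := by
    linear_combination k.choose p.1 * f p.1 * cast_add_one_mul_choose_eq_sub_mul (R := R) r p.2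
  cases a with
  | zero => simp
  | succ a =>
    have up_step (p : ℕ × ℕ) : (r + 1) * (k.choose p.1 * (r.choose p.2 * f (p.1 + 1))) =
        k.choose p.1 * (r + 1).choose (p.2 + 1) * ((p.2 + 1 : ℕ) * f (p.1 + 1)) := by
      push_cast
      linear_combination k.choose p.1 * f (p.1 + 1) * cast_add_one_mul_choose_eq (R := R) r p.2
    have pascal := sum_antidiagonal_succ_choose_succ_nsmul a k fun p ↦ r.choose p.2 * f p.1
    simp only [nsmul_eq_mul] at pascal
    simp only [mul_assoc _ _ (f _), pascal, mul_add, sum_add_distrib]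
    rw [mul_sum, mul_sum]
    simp only [right_step, up_step]
    rw [add_right_inj, Nat.sum_antidiagonal_succ', Nat.cast_zero, zero_mul, mul_zero, zero_add]

theorem sq_add_one_mul_sum_sum_choose_succ {R : Type*} [CommRing R] (a k r : ℕ) (f : ℕ → ℕ → R) :
    (r + 1) ^ 2 * ∑ p ∈ antidiagonal a, (k + 1).choose p.1 * r.choose p.2 *
        ∑ q ∈ antidiagonal a, (k + 1).choose q.1 * r.choose q.2 * f p.1 q.1 =
      ∑ p ∈ antidiagonal a, k.choose p.1 * (r + 1).choose p.2 *
        ∑ q ∈ antidiagonal a, k.choose q.1 * (r + 1).choose q.2 *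
          ((r + 1 - p.2) * ((r + 1 - q.2) * f p.1 q.1 + q.2 * f p.1 (q.1 + 1)) +
            p.2 * ((r + 1 - q.2) * f (p.1 + 1) q.1 + q.2 * f (p.1 + 1) (q.1 + 1))) := by
  rw [sq, mul_assoc, add_one_mul_sum_choose_succ a k r fun u ↦
    ∑ q ∈ antidiagonal a, (k + 1).choose q.1 * r.choose q.2 * f u q.1, mul_sum]
  refine sum_congr rfl fun p _ ↦ ?_
  rw [mul_left_comm, mul_add, mul_left_comm, add_one_mul_sum_choose_succ, mul_left_comm (r + 1 : R),
    add_one_mul_sum_choose_succ, mul_sum, mul_sum, ← sum_add_distrib]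
  congr 1
  exact sum_congr rfl fun q _ ↦ by ring

/-- Total distance after `k` steps between two paths of `k + r` steps, `a` of them upwards, summed
over all pairs of such paths; the components of `p` and `q` count the up-steps of the two paths
among the first `k` and the last `r` steps. -/
def sumPathDist (a k r : ℕ) : ℚ :=
  ∑ p ∈ antidiagonal a, k.choose p.1 * r.choose p.2 *
    ∑ q ∈ antidiagonal a, k.choose q.1 * r.choose q.2 * |(p.1 : ℚ) - q.1|

theorem sum_sum_Par_abs_sub_card_ascents {a b k r : ℕ} (h : k + r = a + b) :
    ∑ l ∈ Par a b, ∑ m ∈ Par a b, |(#(ascents a k l) : ℚ) - #(ascents a k m)| =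
      sumPathDist a k r := by
  have inner (x : ℚ) := sum_Par_card_ascents h fun v ↦ |x - v|
  simp only [inner]
  rw [sum_Par_card_ascents h fun u ↦
    ∑ q ∈ antidiagonal a, k.choose q.1 • r.choose q.2 • |(u : ℚ) - q.1|]
  simp only [sumPathDist, nsmul_eq_mul, mul_assoc]

theorem Sdiff_eq_sum_sumPathDist (a b : ℕ) :
    (Sdiff a b a b : ℚ) = ∑ i ∈ antidiagonal (a + b), sumPathDist a i.1 i.2 := by
  have card_symmDiff (l) (hl : l ∈ Par a b) (m) (hm : m ∈ Par a b) :
      (#(symmDiff l m) : ℚ) = ∑ i ∈ antidiagonal (a + b),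
        |(#(ascents a i.1 l) : ℚ) - #(ascents a i.1 m)| :=
    mod_cast congrArg (Int.cast (R := ℚ)) (card_symmDiff_eq_sum_antidiagonal hl hm)
  calc (Sdiff a b a b : ℚ)
    _ = ∑ l ∈ Par a b, ∑ m ∈ Par a b, ∑ i ∈ antidiagonal (a + b),
          |(#(ascents a i.1 l) : ℚ) - #(ascents a i.1 m)| := by
      rw [Sdiff, Nat.cast_sum]
      refine sum_congr rfl fun l hl ↦ ?_
      rw [Nat.cast_sum]
      exact sum_congr rfl fun m hm ↦ card_symmDiff l hl m hm
    _ = ∑ i ∈ antidiagonal (a + b), ∑ l ∈ Par a b, ∑ m ∈ Par a b,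
          |(#(ascents a i.1 l) : ℚ) - #(ascents a i.1 m)| := by
      simp only [sum_comm (s := Par a b) (t := antidiagonal (a + b))]
    _ = ∑ i ∈ antidiagonal (a + b), sumPathDist a i.1 i.2 :=
      sum_congr rfl fun i hi ↦
        sum_sum_Par_abs_sub_card_ascents (HasAntidiagonal.mem_antidiagonal.1 hi)

/-- Discrete Tanaka formula: the absolute difference of two independent bridges drifts only by a
factor common to all bridges, except where they meet. -/
theorem weighted_abs_sub_step {p q : ℕ × ℕ} (h : p.1 + p.2 = q.1 + q.2) (R : ℚ) :
    (R - p.2) * ((R - q.2) * |(p.1 : ℚ) - q.1| + q.2 * |(p.1 : ℚ) - (q.1 + 1 : ℕ)|) +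
      p.2 * ((R - q.2) * |((p.1 + 1 : ℕ) : ℚ) - q.1| +
        q.2 * |((p.1 + 1 : ℕ) : ℚ) - (q.1 + 1 : ℕ)|) =
      R * (R - 1) * |(p.1 : ℚ) - q.1| + if p = q then 2 * (p.2 * (R - p.2)) else 0 := by
  obtain ⟨u, v⟩ := p
  obtain ⟨u', v'⟩ := q
  have conservation : (u : ℚ) + v = u' + v' := mod_cast h
  push_cast
  rcases lt_trichotomy u u' with hlt | rfl | hgt
  · have : (u : ℚ) + 1 ≤ u' := mod_cast hlt
    rw [if_neg (by simp [hlt.ne]), abs_of_nonpos (by linarith), abs_of_nonpos (by linarith),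
      abs_of_nonpos (by linarith), abs_of_nonpos (by linarith)]
    linear_combination -R * conservation
  · obtain rfl : v = v' := Nat.add_left_cancel h
    simp only [sub_self, abs_zero, add_sub_cancel_left, sub_add_cancel_left, abs_neg, abs_one,
      if_true]
    ring
  · have : (u' : ℚ) + 1 ≤ u := mod_cast hgt
    rw [if_neg (by simp [hgt.ne']), abs_of_nonneg (by linarith), abs_of_nonneg (by linarith),
      abs_of_nonneg (by linarith), abs_of_nonneg (by linarith)]
    linear_combination R * conservation

theorem add_one_mul_sumPathDist_succ (a k r : ℕ) :
    (r + 1) * sumPathDist a (k + 1) r = r * sumPathDist a k (r + 1) +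
      2 * ∑ p ∈ antidiagonal a,
        (k.choose p.1 : ℚ) ^ 2 * (p.2 * (r + 1).choose p.2 * r.choose p.2) := by
  have meeting (p : ℕ × ℕ) : (k.choose p.1 * (r + 1).choose p.2 : ℚ) ^ 2 *
      (2 * (p.2 * (r + 1 - p.2))) =
      (r + 1) * (2 * (k.choose p.1 ^ 2 * (p.2 * (r + 1).choose p.2 * r.choose p.2))) := by
    linear_combination (-2 * p.2 * k.choose p.1 ^ 2 * (r + 1).choose p.2 : ℚ) *
      cast_add_one_mul_choose_eq_sub_mul (R := ℚ) r p.2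
  have inner (p : ℕ × ℕ) (hp : p ∈ antidiagonal a) :
      ∑ q ∈ antidiagonal a, (k.choose q.1 * (r + 1).choose q.2 : ℚ) *
        ((r + 1) * (r + 1 - 1) * |(p.1 : ℚ) - q.1| +
          if p = q then (2 * (p.2 * (r + 1 - p.2)) : ℚ) else 0) =
      (r + 1) * (r * ∑ q ∈ antidiagonal a, k.choose q.1 * (r + 1).choose q.2 *
        |(p.1 : ℚ) - q.1|) +
        k.choose p.1 * (r + 1).choose p.2 * (2 * (p.2 * (r + 1 - p.2))) := by
    simp only [mul_add, sum_add_distrib, mul_ite, mul_zero, sum_ite_eq_of_mem _ _ _ hp, mul_sum]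
    rw [add_left_inj]
    exact sum_congr rfl fun q _ ↦ by ring
  refine mul_left_cancel₀ (show (r + 1 : ℚ) ≠ 0 by positivity) ?_
  rw [← mul_assoc, ← sq, sumPathDist, sumPathDist,
    sq_add_one_mul_sum_sum_choose_succ a k r fun u v ↦ |(u : ℚ) - v|, mul_add, mul_sum, mul_sum,
    mul_sum, mul_sum, ← sum_add_distrib]
  refine sum_congr rfl fun p hp ↦ ?_
  have tanaka := sum_congr rfl fun q (hq : q ∈ antidiagonal a) ↦
    congrArg ((k.choose q.1 * (r + 1).choose q.2 : ℚ) * ·) (weighted_abs_sub_step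
      ((HasAntidiagonal.mem_antidiagonal.1 hp).trans (HasAntidiagonal.mem_antidiagonal.1 hq).symm)
      (r + 1))
  rw [tanaka, inner p hp]
  linear_combination meeting p

theorem sumPathDist_zero_middle (a r : ℕ) : sumPathDist a 0 r = 0 := by
  cases a <;> simp [sumPathDist, Nat.sum_antidiagonal_succ]

theorem sumPathDist_zero_right (a k : ℕ) : sumPathDist a k 0 = 0 := by
  cases a <;> simp [sumPathDist, Nat.sum_antidiagonal_succ']

theorem sum_sumPathDist_succ (a n : ℕ) :
    ∑ i ∈ antidiagonal (n + 1), sumPathDist a i.1 i.2 =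
      ∑ i ∈ antidiagonal n, ∑ p ∈ antidiagonal a,
        (i.1.choose p.1 : ℚ) ^ 2 * (p.2 * (i.2 + 1).choose p.2 * i.2.choose p.2) := by
  have steps := sum_congr rfl fun i (_ : i ∈ antidiagonal n) ↦
    add_one_mul_sumPathDist_succ a i.1 i.2
  have shift_left := Nat.sum_antidiagonal_succ (n := n)
    (f := fun i ↦ ((i.2 : ℚ) + 1) * sumPathDist a i.1 i.2)
  have shift_right := Nat.sum_antidiagonal_succ' (n := n)
    (f := fun i ↦ ((i.2 : ℚ) - 1) * sumPathDist a i.1 i.2)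
  simp only [sumPathDist_zero_middle, sumPathDist_zero_right, mul_zero, zero_add,
    Nat.cast_add, Nat.cast_one, add_sub_cancel_right] at shift_left shift_right
  rw [sum_add_distrib, ← shift_left, ← shift_right, ← mul_sum, ← sub_eq_iff_eq_add',
    ← sum_sub_distrib] at steps
  refine mul_left_cancel₀ two_ne_zero ?_
  rw [← steps, mul_sum]
  exact sum_congr rfl fun i _ ↦ by ring

end CoupledPaths

section ClosedForm

theorem sum_antidiagonal_succ_mul_choose_succ_mul_choose {R : Type*} [CommRing R] (a r : ℕ)
    (g : ℕ → R) :
    ∑ p ∈ antidiagonal (a + 1), g p.1 * (p.2 * (r + 1).choose p.2 * r.choose p.2) =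
      ∑ p ∈ antidiagonal (a + 1), g p.1 * (p.2 * r.choose p.2 ^ 2) +
        ∑ p ∈ antidiagonal a, g p.1 * ((r - p.2) * r.choose p.2 ^ 2) := by
  simp only [Nat.sum_antidiagonal_succ', Nat.cast_zero, zero_mul, mul_zero, zero_add]
  rw [← sum_add_distrib]
  refine sum_congr rfl fun p _ ↦ ?_
  have ratio := cast_add_one_mul_choose_add_one (R := R) r p.2
  rw [Nat.choose_succ_succ']
  push_cast
  linear_combination g p.1 * r.choose p.2 * ratio

theorem sum_linear_mul_choose_sq_mul_choose_sq (N c : ℕ) (α β : ℚ) :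
    ∑ i ∈ antidiagonal N, ∑ j ∈ antidiagonal c,
        (i.1.choose j.1 : ℚ) ^ 2 * ((α * i.2 + β * j.2) * (i.2.choose j.2 : ℚ) ^ 2) =
      (α * N + β * c) * (2 * N + 2).choose (2 * c + 1) / 4 := by
  have swapped : ∑ i ∈ antidiagonal N, ∑ j ∈ antidiagonal c,
      (i.1.choose j.1 : ℚ) ^ 2 * ((α * i.2 + β * j.2) * (i.2.choose j.2 : ℚ) ^ 2) =
      ∑ i ∈ antidiagonal N, ∑ j ∈ antidiagonal c,
        (i.2.choose j.2 : ℚ) ^ 2 * ((α * i.1 + β * j.1) * (i.1.choose j.1 : ℚ) ^ 2) := by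
    rw [← Nat.sum_antidiagonal_swap]
    refine sum_congr rfl fun i _ ↦ ?_
    rw [← Nat.sum_antidiagonal_swap]
    rfl
  have convolution : 2 * ∑ i ∈ antidiagonal N, ∑ j ∈ antidiagonal c,
      (i.1.choose j.1 : ℚ) ^ 2 * (i.2.choose j.2 : ℚ) ^ 2 = (2 * N + 2).choose (2 * c + 1) :=
    mod_cast two_mul_sum_choose_sq_mul_choose_sq N c
  have sum_both : ∑ i ∈ antidiagonal N, ∑ j ∈ antidiagonal c,
      (i.1.choose j.1 : ℚ) ^ 2 * ((α * i.2 + β * j.2) * (i.2.choose j.2 : ℚ) ^ 2) +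
      ∑ i ∈ antidiagonal N, ∑ j ∈ antidiagonal c,
        (i.2.choose j.2 : ℚ) ^ 2 * ((α * i.1 + β * j.1) * (i.1.choose j.1 : ℚ) ^ 2) =
      (α * N + β * c) * ∑ i ∈ antidiagonal N, ∑ j ∈ antidiagonal c,
        (i.1.choose j.1 : ℚ) ^ 2 * (i.2.choose j.2 : ℚ) ^ 2 := by
    simp only [← sum_add_distrib, mul_sum]
    refine sum_congr rfl fun i hi ↦ sum_congr rfl fun j hj ↦ ?_
    rw [← HasAntidiagonal.mem_antidiagonal.1 hi, ← HasAntidiagonal.mem_antidiagonal.1 hj]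
    push_cast
    ring
  linear_combination sum_both / 2 + swapped / 2 + (α * N + β * c) / 4 * convolution

theorem four_mul_Sdiff_succ (a b : ℕ) :
    4 * Sdiff (a + 1) b (a + 1) b =
      (a + 1) * (2 * (a + b) + 2).choose (2 * a + 3) +
        b * (2 * (a + b) + 2).choose (2 * a + 1) := by
  have first := sum_linear_mul_choose_sq_mul_choose_sq (a + b) (a + 1) 0 1
  have second := sum_linear_mul_choose_sq_mul_choose_sq (a + b) a 1 (-1)
  simp only [zero_mul, one_mul, zero_add, neg_mul, ← sub_eq_add_neg] at first second
  have split (i : ℕ × ℕ) :=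
    sum_antidiagonal_succ_mul_choose_succ_mul_choose a i.2 fun u ↦ (i.1.choose u : ℚ) ^ 2
  have closed_form := Sdiff_eq_sum_sumPathDist (a + 1) b
  simp only [add_right_comm a 1 b, sum_sumPathDist_succ, split, sum_add_distrib, first,
    second] at closed_form
  qify
  rw [closed_form, show 2 * a + 3 = 2 * (a + 1) + 1 from rfl]
  push_cast
  ring

theorem four_mul_add_two_mul_choose_add_choose (a b : ℕ) :
    (4 * (a + 1) + 4 * b + 2) * ((a + 1) * (2 * (a + b) + 2).choose (2 * a + 3) +
        b * (2 * (a + b) + 2).choose (2 * a + 1)) =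
      4 * ((a + 1) * b * (2 * (a + 1) + 2 * b + 2).choose (2 * (a + 1) + 1)) := by
  have pascal : (2 * (a + 1) + 2 * b + 2).choose (2 * (a + 1) + 1) =
      (2 * (a + b) + 2).choose (2 * a + 1) + 2 * (2 * (a + b) + 2).choose (2 * a + 2) +
        (2 * (a + b) + 2).choose (2 * a + 3) := by
    rw [← choose_add_two_add_two, show 2 * (a + 1) + 2 * b + 2 = 2 * (a + b) + 2 + 2 by ring]
    rfl
  have ratio₁ := cast_add_one_mul_choose_add_one (R := ℚ) (2 * (a + b) + 2) (2 * a + 1)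
  have ratio₂ := cast_add_one_mul_choose_add_one (R := ℚ) (2 * (a + b) + 2) (2 * a + 2)
  rw [pascal]
  qify
  push_cast at ratio₁ ratio₂
  linear_combination 2 * (a + 1 : ℚ) * ratio₂ - 2 * b * ratio₁

end ClosedForm

/-- The Wiener index of the minuscule lattice `Par(a×b)` (equation (4.2)):
`(4a+4b+2) · S⊖(a,b | a,b) = a·b·C(2a+2b+2, 2a+1)`. -/
theorem wiener_index_Par (a b : ℕ) :
    (4 * a + 4 * b + 2) * Sdiff a b a b = a * b * (2 * a + 2 * b + 2).choose (2 * a + 1) := by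
  cases a with
  | zero => simp [Sdiff, Par_zero_left]
  | succ a =>
    refine Nat.eq_of_mul_eq_mul_left four_pos ?_
    rw [mul_left_comm, four_mul_Sdiff_succ, four_mul_add_two_mul_choose_add_choose]
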